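/- (Local Lipschitz continuity of the Itô–Lyons map.) Fix α ∈ (1/3, 1/2] and M > 0. Let f : ℝ^e → L(ℝ^d, ℝ^e) be bounded with bounded first, second and third derivatives (f ∈ C³_b). Let 𝐗 = (X, 𝕏) and 𝐗̃ = (X̃, 𝕏̃) be α-Hölder rough paths with values in ℝ^d satisfying ‖𝐗‖_{𝒞^α} ≤ M and ‖𝐗̃‖_{𝒞^α} ≤ M, where ‖𝐗‖_{𝒞^α} := ‖X‖_α + ‖𝕏‖_{2α}^{1/2}. Then there exist a time T₀ > 0 and a constant C, depending only on M, α and f, with the following property: if Y and Ỹ are the unique solutions on [0,T₀] of the rough differential equations dY = f(Y) d𝐗 with Y_0 = ξ and dỸ = f(Ỹ) d𝐗̃ with Ỹ_0 = ξ̃, then ‖Y − Ỹ‖_α ≤ C (|ξ − ξ̃| + ϱ_α(𝐗, 𝐗̃)), where ϱ_α(𝐗,𝐗̃) := ‖X − X̃‖_α + ‖𝕏 − 𝕏̃‖_{2α}. -/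

import Mathlib

noncomputable section

open scoped BigOperators

/-- `ℝ^d` with the Euclidean norm. -/
abbrev Euc (d : ℕ) := EuclideanSpace ℝ (Fin d)

/-- The set of ratios `‖X_{s,t}‖ / (t-s)^α` over `0 ≤ s < t ≤ T`; its supremum is the
`α`-Hölder norm of the path `X` on `[0,T]`. -/
def holderRatios (α T : ℝ) {V : Type*} [NormedAddCommGroup V] (X : ℝ → V) : Set ℝ :=
  {r | ∃ s t : ℝ, 0 ≤ s ∧ s < t ∧ t ≤ T ∧ r = ‖X t - X s‖ / (t - s) ^ α}

/-- The set of ratios `‖𝕏_{s,t}‖ / |t-s|^{2α}` over `s ≠ t` in `[0,T]`; its supremum is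
the `2α`-Hölder norm of the two-parameter function `𝕏` on `[0,T]²`. -/
def holderRatios2 (α T : ℝ) {V : Type*} [NormedAddCommGroup V] (XX : ℝ → ℝ → V) : Set ℝ :=
  {r | ∃ s t : ℝ, 0 ≤ s ∧ 0 ≤ t ∧ s ≤ T ∧ t ≤ T ∧ s ≠ t ∧
    r = ‖XX s t‖ / |t - s| ^ (2 * α)}

/-- Contraction of a (continuous) bilinear map `B : ℝ^d × ℝ^d → ℝ^e` against a tensor
`M ∈ ℝ^{d×d}`, i.e. `Σ_{i,j} M^{ij} B(e_i, e_j)`. -/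
def contractTensor {d e : ℕ} (B : Euc d →L[ℝ] Euc d →L[ℝ] Euc e)
    (M : EuclideanSpace ℝ (Fin d × Fin d)) : Euc e :=
  ∑ i : Fin d, ∑ j : Fin d,
    M (i, j) • B (EuclideanSpace.single i (1 : ℝ)) (EuclideanSpace.single j (1 : ℝ))

/-- `(X, 𝕏)` is an `α`-Hölder rough path on `[0,1]` with values in `ℝ^d`:
`X` is continuous, Chen's identity holds, and both Hölder norms are finite. -/
def IsRoughPath (α : ℝ) {d : ℕ} (X : ℝ → Euc d)
    (XX : ℝ → ℝ → EuclideanSpace ℝ (Fin d × Fin d)) : Prop :=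
  ContinuousOn X (Set.Icc 0 1) ∧
  (∀ s u t : ℝ, 0 ≤ s → s ≤ u → u ≤ t → t ≤ 1 → ∀ i j : Fin d,
    XX s t (i, j) - XX s u (i, j) - XX u t (i, j) = (X u i - X s i) * (X t j - X u j)) ∧
  BddAbove (holderRatios α 1 X) ∧ BddAbove (holderRatios2 α 1 XX)

/-- `Y : [0,T₀] → ℝ^e` solves the RDE `dY = f(Y) d𝐗`, `Y_0 = ξ`, on `[0,T₀]`: `Y` is
continuous, `(Y, f∘Y)` is controlled by `X`, and for every `t ∈ [0,T₀]` the compensated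
Riemann sums `Σ ( f(Y_u) X_{u,v} + Df(Y_u)f(Y_u) 𝕏_{u,v} )` over partitions of `[0,t]`
converge to `Y_t - ξ` as the mesh tends to `0`. -/
def SolvesRDE (α T₀ : ℝ) {d e : ℕ} (X : ℝ → Euc d)
    (XX : ℝ → ℝ → EuclideanSpace ℝ (Fin d × Fin d))
    (f : Euc e → (Euc d →L[ℝ] Euc e)) (ξ : Euc e) (Y : ℝ → Euc e) : Prop :=
  ContinuousOn Y (Set.Icc 0 T₀) ∧
  BddAbove (holderRatios α T₀ (fun t => f (Y t))) ∧
  BddAbove (holderRatios2 α T₀ (fun s t => Y t - Y s - (f (Y s)) (X t - X s))) ∧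
  ∀ t ∈ Set.Icc (0 : ℝ) T₀, ∀ ε : ℝ, 0 < ε → ∃ δ : ℝ, 0 < δ ∧
    ∀ (k : ℕ) (τ : ℕ → ℝ), τ 0 = 0 → τ k = t →
      (∀ i < k, τ i < τ (i + 1)) → (∀ i < k, τ (i + 1) - τ i ≤ δ) →
      ‖(∑ i ∈ Finset.range k,
          ((f (Y (τ i))) (X (τ (i + 1)) - X (τ i)) +
            contractTensor
              ((fderiv ℝ f (Y (τ i))).comp (f (Y (τ i))))
              (XX (τ i) (τ (i + 1))))) - (Y t - ξ)‖ ≤ ε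

/-! Both solutions are compared through Davie's germ `f(Y_s) X_{s,t} + (Df · f)(Y_s) 𝕏_{s,t}`. By
Chen's relation the failure of additivity of the germ is, up to sign, the remainder of `f ∘ Y` as a
controlled path applied to `X_{u,t}`, plus the increment of `(Df · f) ∘ Y` paired with `𝕏_{u,t}`;
it is of order `3α > 1`, so by sewing `Y` differs from its germ by a term of order `3α`. On a time
interval of length `T` this term gains a factor `T^α` at order `2α`, which makes the map from a
Hölder constant of the remainder to the next one a contraction for small `T`. The same scheme, run
on the difference of the two germs, bounds the Hölder constant of `Y - Ỹ` in terms of itself and of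
the data; `C³` regularity enters through the difference of two Taylor remainders. In both cases the
infimum of the admissible constants exists, because the solutions are known to be Hölder, and the
contraction bounds it. -/

section Calculus

variable {E F G H : Type*} [NormedAddCommGroup E] [NormedSpace ℝ E]
  [NormedAddCommGroup F] [NormedSpace ℝ F] [NormedAddCommGroup G] [NormedSpace ℝ G]
  [NormedAddCommGroup H] [NormedSpace ℝ H] {m n : ℕ} {N N' : ℝ} {g : E → F}

/-- `g` is of class `C^n_b`, with `N` a common bound for `g` and its derivatives up to order `n`. -/
structure BddContDiff (n : ℕ) (N : ℝ) (g : E → F) : Prop where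
  contDiff : ContDiff ℝ n g
  norm_iteratedFDeriv_le : ∀ i ≤ n, ∀ x, ‖iteratedFDeriv ℝ i g x‖ ≤ N

lemma exists_bddContDiff (hg : ContDiff ℝ n g)
    (hbdd : ∀ i ≤ n, ∃ C : ℝ, ∀ x, ‖iteratedFDeriv ℝ i g x‖ ≤ C) :
    ∃ N, BddContDiff n N g := by
  choose! C hC using hbdd
  have hC_nonneg : ∀ i ∈ Finset.range (n + 1), 0 ≤ C i := fun i hi =>
    (norm_nonneg _).trans (hC i (Finset.mem_range_succ_iff.mp hi) 0)
  exact ⟨∑ i ∈ Finset.range (n + 1), C i, hg, fun i hi x => (hC i hi x).trans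
    (Finset.single_le_sum hC_nonneg (Finset.mem_range_succ_iff.mpr hi))⟩

namespace BddContDiff

lemma of_le (hg : BddContDiff n N g) (hmn : m ≤ n) : BddContDiff m N g :=
  ⟨hg.contDiff.of_le (by exact_mod_cast hmn), fun i hi =>
    hg.norm_iteratedFDeriv_le i (hi.trans hmn)⟩

lemma mono (hg : BddContDiff n N g) (hN : N ≤ N') : BddContDiff n N' g :=
  ⟨hg.contDiff, fun i hi x => (hg.norm_iteratedFDeriv_le i hi x).trans hN⟩

lemma fderiv_right (hg : BddContDiff (n + 1) N g) : BddContDiff n N (fderiv ℝ g) where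
  contDiff := hg.contDiff.fderiv_right (by norm_cast)
  norm_iteratedFDeriv_le i hi x :=
    norm_iteratedFDeriv_fderiv.trans_le (hg.norm_iteratedFDeriv_le (i + 1) (by lia) x)

lemma norm_apply_le (hg : BddContDiff n N g) (x : E) : ‖g x‖ ≤ N := by
  simpa using hg.norm_iteratedFDeriv_le 0 n.zero_le x

lemma bound_nonneg (hg : BddContDiff n N g) : 0 ≤ N :=
  (norm_nonneg _).trans (hg.norm_apply_le 0)

lemma norm_fderiv_le (hg : BddContDiff 1 N g) (x : E) : ‖fderiv ℝ g x‖ ≤ N :=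
  hg.fderiv_right.norm_apply_le x

lemma hasFDerivAt (hg : BddContDiff 1 N g) (x : E) : HasFDerivAt g (fderiv ℝ g x) x :=
  (hg.contDiff.differentiable (by norm_num) x).hasFDerivAt

lemma lipschitz (hg : BddContDiff 1 N g) (x y : E) : ‖g x - g y‖ ≤ N * ‖x - y‖ :=
  convex_univ.norm_image_sub_le_of_norm_hasFDerivWithin_le
    (fun z _ => (hg.hasFDerivAt z).hasFDerivWithinAt) (fun z _ => hg.norm_fderiv_le z)
    (Set.mem_univ y) (Set.mem_univ x)

lemma norm_second_difference_le (hg : BddContDiff 2 N g) (u s u' s' : E) :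
    ‖(g u - g s) - (g u' - g s')‖ ≤ N * (‖u - s‖ * ‖s - s'‖ + ‖(u - s) - (u' - s')‖) := by
  have hg₁ : BddContDiff 1 N g := hg.of_le one_le_two
  have hderiv : ∀ x, HasFDerivAt (fun x => g (x + (u - s)) - g x)
      (fderiv ℝ g (x + (u - s)) - fderiv ℝ g x) x := fun x =>
    ((hasFDerivAt_comp_add_right (u - s)).2 (hg₁.hasFDerivAt _)).sub (hg₁.hasFDerivAt x)
  have hbase : ‖(g (s + (u - s)) - g s) - (g (s' + (u - s)) - g s')‖ ≤
      N * ‖u - s‖ * ‖s - s'‖ :=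
    convex_univ.norm_image_sub_le_of_norm_hasFDerivWithin_le
      (f := fun x => g (x + (u - s)) - g x) (fun x _ => (hderiv x).hasFDerivWithinAt)
      (fun x _ => by simpa using hg.fderiv_right.lipschitz (x + (u - s)) x)
      (Set.mem_univ s') (Set.mem_univ s)
  have hincr : ‖g (s' + (u - s)) - g u'‖ ≤ N * ‖(u - s) - (u' - s')‖ := by
    convert hg₁.lipschitz (s' + (u - s)) u' using 3
    abel
  calc ‖(g u - g s) - (g u' - g s')‖
      = ‖((g (s + (u - s)) - g s) - (g (s' + (u - s)) - g s')) + (g (s' + (u - s)) - g u')‖ := by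
        rw [add_sub_cancel]; congr 1; abel
    _ ≤ N * ‖u - s‖ * ‖s - s'‖ + N * ‖(u - s) - (u' - s')‖ := norm_add_le_of_le hbase hincr
    _ = _ := by ring

end BddContDiff

/-- The first-order Taylor remainder of `g` at `x` in the direction `h`. -/
def taylorRem (g : E → F) (x h : E) : F := g (x + h) - g x - fderiv ℝ g x h

namespace BddContDiff

lemma norm_taylorRem_sub_le_of_base_eq (hg : BddContDiff 2 N g) (x h h' : E) :
    ‖taylorRem g x h - taylorRem g x h'‖ ≤ N * (‖h‖ + ‖h'‖) * ‖h - h'‖ := by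
  have hg₁ : BddContDiff 1 N g := hg.of_le one_le_two
  have hderiv : ∀ k, HasFDerivAt (taylorRem g x) (fderiv ℝ g (x + k) - fderiv ℝ g x) k := fun k =>
    (((hasFDerivAt_comp_add_left x).2 (hg₁.hasFDerivAt _)).sub_const (g x)).sub
      (fderiv ℝ g x).hasFDerivAt
  refine (convex_closedBall (0 : E) (‖h‖ + ‖h'‖)).norm_image_sub_le_of_norm_hasFDerivWithin_le
    (fun k _ => (hderiv k).hasFDerivWithinAt) (fun k hk => ?_) (by simp) (by simp)
  have hlip : ‖fderiv ℝ g (x + k) - fderiv ℝ g x‖ ≤ N * ‖k‖ := by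
    simpa using hg.fderiv_right.lipschitz (x + k) x
  exact hlip.trans (mul_le_mul_of_nonneg_left (mem_closedBall_zero_iff.mp hk) hg.bound_nonneg)

lemma norm_taylorRem_le (hg : BddContDiff 2 N g) (x h : E) :
    ‖taylorRem g x h‖ ≤ N * ‖h‖ ^ 2 := by
  simpa [taylorRem, sq, mul_assoc] using hg.norm_taylorRem_sub_le_of_base_eq x h 0

lemma norm_taylorRem_sub_le_of_increment_eq (hg : BddContDiff 3 N g) (x x' h : E) :
    ‖taylorRem g x h - taylorRem g x' h‖ ≤ N * ‖h‖ ^ 2 * ‖x - x'‖ := by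
  have hg₁ : BddContDiff 1 N g := hg.of_le (by norm_num)
  have hg₂ : BddContDiff 2 N (fderiv ℝ g) := hg.fderiv_right
  have hderiv₂ : ∀ z, HasFDerivAt (fderiv ℝ g) (fderiv ℝ (fderiv ℝ g) z) z :=
    (hg₂.of_le one_le_two).hasFDerivAt
  have hderiv : ∀ z, HasFDerivAt (fun z => taylorRem g z h) (taylorRem (fderiv ℝ g) z h) z := by
    intro z
    have hsymm : fderiv ℝ (fderiv ℝ g) z h = (fderiv ℝ (fderiv ℝ g) z).flip h := by
      ext k
      exact second_derivative_symmetric hg₁.hasFDerivAt (hderiv₂ z) h k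
    rw [taylorRem, hsymm]
    exact (((hasFDerivAt_comp_add_right h).2 (hg₁.hasFDerivAt _)).sub (hg₁.hasFDerivAt z)).sub
      (by simpa using (hderiv₂ z).clm_apply (hasFDerivAt_const h z))
  exact convex_univ.norm_image_sub_le_of_norm_hasFDerivWithin_le
    (fun z _ => (hderiv z).hasFDerivWithinAt) (fun z _ => hg₂.norm_taylorRem_le z h)
    (Set.mem_univ x') (Set.mem_univ x)

lemma norm_taylorRem_sub_le (hg : BddContDiff 3 N g) (x x' h h' : E) :
    ‖taylorRem g x h - taylorRem g x' h'‖ ≤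
      N * (‖h‖ ^ 2 * ‖x - x'‖ + (‖h‖ + ‖h'‖) * ‖h - h'‖) := by
  rw [← sub_add_sub_cancel (taylorRem g x h) (taylorRem g x' h), mul_add, ← mul_assoc, ← mul_assoc]
  exact norm_add_le_of_le (hg.norm_taylorRem_sub_le_of_increment_eq x x' h)
    ((hg.of_le (by norm_num)).norm_taylorRem_sub_le_of_base_eq x' h h')

lemma clm_comp {L : E → G →L[ℝ] H} {g : E → F →L[ℝ] G}
    (hL : BddContDiff n N L) (hg : BddContDiff n N' g) :
    BddContDiff n (2 ^ n * (N * N')) (fun x => (L x).comp (g x)) := by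
  refine ⟨hL.contDiff.clm_comp hg.contDiff, fun i hi x => ?_⟩
  have hN := hL.bound_nonneg
  have hN' := hg.bound_nonneg
  calc ‖iteratedFDeriv ℝ i (fun x => (L x).comp (g x)) x‖
      ≤ ∑ j ∈ Finset.range (i + 1),
          i.choose j * ‖iteratedFDeriv ℝ j L x‖ * ‖iteratedFDeriv ℝ (i - j) g x‖ :=
        (ContinuousLinearMap.compL ℝ F G H).norm_iteratedFDeriv_le_of_bilinear_of_le_one
          hL.contDiff hg.contDiff x (by exact_mod_cast hi)
          (ContinuousLinearMap.norm_compL_le ℝ F G H)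
    _ ≤ ∑ j ∈ Finset.range (i + 1), i.choose j * N * N' := by
        gcongr with j hj
        · exact hL.norm_iteratedFDeriv_le j ((Finset.mem_range_succ_iff.mp hj).trans hi) x
        · exact hg.norm_iteratedFDeriv_le (i - j) ((Nat.sub_le i j).trans hi) x
    _ = 2 ^ i * (N * N') := by
        rw [← Finset.sum_mul, ← Finset.sum_mul, mul_assoc]
        exact_mod_cast congrArg (fun k : ℕ => (k : ℝ) * (N * N')) (Nat.sum_range_choose i)
    _ ≤ 2 ^ n * (N * N') := by gcongr; norm_num

end BddContDiff

end Calculus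

section HolderBounds

variable {F V : Type*} [NormedAddCommGroup F] [NormedAddCommGroup V]
  {α T T' K K' N : ℝ} {j k n : ℕ} {Z Z' : ℝ → ℝ → F}

/-- The increment `X_{s,t}` of a path. -/
def increment (X : ℝ → F) (s t : ℝ) : F := X t - X s

/-- `Z` is of Hölder order `nα` on `[0,T]` with constant `K`. The diagonal is left out, so that no
assumption on the sign of `α` or on the values `Z s s` is built in. -/
def HolderBound (α T : ℝ) (n : ℕ) (K : ℝ) (Z : ℝ → ℝ → F) : Prop :=
  ∀ ⦃s t⦄, 0 ≤ s → s < t → t ≤ T → ‖Z s t‖ ≤ K * ((t - s) ^ α) ^ n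

lemma increment_sub_increment (X X' : ℝ → F) :
    increment X - increment X' = increment (X - X') := by
  funext s t
  exact sub_sub_sub_comm (X t) (X s) (X' t) (X' s)

lemma isClosed_setOf_holderBound (α T : ℝ) (n : ℕ) (Z : ℝ → ℝ → F) :
    IsClosed {K | HolderBound α T n K Z} := by
  simp only [HolderBound, Set.ofPred_forall]
  exact isClosed_iInter fun s => isClosed_iInter fun t => isClosed_iInter fun _ =>
    isClosed_iInter fun _ => isClosed_iInter fun _ =>
      isClosed_le continuous_const (continuous_id.mul continuous_const)

namespace HolderBound

lemma mono (hZ : HolderBound α T n K Z) (hK : K ≤ K') : HolderBound α T n K' Z := by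
  intro s t hs hst ht
  have : 0 ≤ (t - s) ^ α := Real.rpow_nonneg (sub_pos.mpr hst).le α
  exact (hZ hs hst ht).trans (by gcongr)

lemma mono_time (hZ : HolderBound α T n K Z) (hT : T' ≤ T) : HolderBound α T' n K Z :=
  fun _ _ hs hst ht => hZ hs hst (ht.trans hT)

lemma bound_nonneg (hZ : HolderBound α T n K Z) {s t : ℝ} (hs : 0 ≤ s) (hst : s < t) (ht : t ≤ T) :
    0 ≤ K :=
  nonneg_of_mul_nonneg_left ((norm_nonneg _).trans (hZ hs hst ht))
    (pow_pos (Real.rpow_pos_of_pos (sub_pos.mpr hst) α) n)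

lemma add (hZ : HolderBound α T n K Z) (hZ' : HolderBound α T n K' Z') :
    HolderBound α T n (K + K') (Z + Z') := fun _ _ hs hst ht =>
  (norm_add_le_of_le (hZ hs hst ht) (hZ' hs hst ht)).trans_eq (add_mul _ _ _).symm

lemma sub (hZ : HolderBound α T n K Z) (hZ' : HolderBound α T n K' Z') :
    HolderBound α T n (K + K') (Z - Z') := fun _ _ hs hst ht =>
  (norm_sub_le_of_le (hZ hs hst ht) (hZ' hs hst ht)).trans_eq (add_mul _ _ _).symm

lemma lower (hZ : HolderBound α T (n + 1) K Z) (hα : 0 ≤ α) :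
    HolderBound α T n (K * T ^ α) Z := by
  intro s t hs hst ht
  have : 0 ≤ t - s := (sub_pos.mpr hst).le
  have hK : 0 ≤ K := hZ.bound_nonneg hs hst ht
  calc ‖Z s t‖ ≤ K * ((t - s) ^ α) ^ (n + 1) := hZ hs hst ht
    _ = K * (t - s) ^ α * ((t - s) ^ α) ^ n := by ring
    _ ≤ K * T ^ α * ((t - s) ^ α) ^ n := by gcongr; linarith

lemma norm_increment_le {X : ℝ → F} (hX : HolderBound α T 1 K (increment X)) (hα : 0 ≤ α)
    (hK : 0 ≤ K) {t : ℝ} (ht : t ∈ Set.Icc 0 T) : ‖X t‖ ≤ ‖X 0‖ + K * T ^ α := by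
  have hT : 0 ≤ T := ht.1.trans ht.2
  rcases ht.1.eq_or_lt with rfl | ht₀
  · exact le_add_of_nonneg_right (mul_nonneg hK (Real.rpow_nonneg hT α))
  · have hincr : ‖X t - X 0‖ ≤ K * T ^ α := by
      simpa [increment] using hX.lower (n := 0) hα le_rfl ht₀ ht.2
    exact (norm_le_norm_add_norm_sub' _ _).trans (add_le_add_right hincr _)

lemma norm_sub_le_of_norm_zero_le {Y Y' : ℝ → F} {r : ℝ}
    (hY : HolderBound α T 1 K (increment Y - increment Y')) (hα : 0 ≤ α) (hK : 0 ≤ K)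
    (hr : ‖Y 0 - Y' 0‖ ≤ r) : ∀ t ∈ Set.Icc 0 T, ‖Y t - Y' t‖ ≤ r + K * T ^ α := fun _ ht => by
  rw [increment_sub_increment] at hY
  exact (hY.norm_increment_le hα hK ht).trans (add_le_add_left hr _)

variable [NormedSpace ℝ F] [NormedSpace ℝ V]

lemma clm_apply {L : ℝ → F →L[ℝ] V} (hL : ∀ s, ‖L s‖ ≤ N) (hZ : HolderBound α T n K Z) :
    HolderBound α T n (N * K) (fun s t => L s (Z s t)) := fun s _ hs hst ht =>
  ((L s).le_of_opNorm_le_of_le (hL s) (hZ hs hst ht)).trans_eq (mul_assoc _ _ _).symm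

lemma clm_apply_sub {L L' : ℝ → F →L[ℝ] V} {l : ℝ} (hL : ∀ s ∈ Set.Icc 0 T, ‖L s - L' s‖ ≤ l)
    (hL' : ∀ s, ‖L' s‖ ≤ N) (hZ : HolderBound α T n K Z) (hZZ' : HolderBound α T n K' (Z - Z')) :
    HolderBound α T n (l * K + N * K')
      ((fun s t => L s (Z s t)) - fun s t => L' s (Z' s t)) := by
  intro s t hs hst ht
  have hs' : s ∈ Set.Icc 0 T := ⟨hs, hst.le.trans ht⟩
  calc ‖L s (Z s t) - L' s (Z' s t)‖
      = ‖(L s - L' s) (Z s t) + L' s ((Z - Z') s t)‖ := by simp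
    _ ≤ l * (K * ((t - s) ^ α) ^ n) + N * (K' * ((t - s) ^ α) ^ n) :=
        norm_add_le_of_le
          ((L s - L' s).le_of_opNorm_le_of_le (hL s hs') (hZ hs hst ht))
          ((L' s).le_of_opNorm_le_of_le (hL' s) (hZZ' hs hst ht))
    _ = _ := by ring

lemma norm_apply_le {P : ℝ → ℝ → F →L[ℝ] V} (hP : HolderBound α T j K P)
    (hZ : HolderBound α T k K' Z) (hα : 0 ≤ α) {s u t : ℝ} (hs : 0 ≤ s) (hsu : s < u)
    (hut : u < t) (ht : t ≤ T) : ‖P s u (Z u t)‖ ≤ K * K' * ((t - s) ^ α) ^ (j + k) := by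
  have hK : 0 ≤ K := hP.bound_nonneg hs hsu (hut.le.trans ht)
  have hK' : 0 ≤ K' := hZ.bound_nonneg (hs.trans hsu.le) hut ht
  have : 0 ≤ u - s := (sub_pos.mpr hsu).le
  have : 0 ≤ t - u := (sub_pos.mpr hut).le
  have hst' : 0 ≤ t - s := by linarith
  calc ‖P s u (Z u t)‖
      ≤ K * ((u - s) ^ α) ^ j * (K' * ((t - u) ^ α) ^ k) :=
        (P s u).le_of_opNorm_le_of_le (hP hs hsu (hut.le.trans ht))
          (hZ (hs.trans hsu.le) hut ht)
    _ ≤ K * ((t - s) ^ α) ^ j * (K' * ((t - s) ^ α) ^ k) := by gcongr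
    _ = _ := by ring

lemma norm_apply_sub_apply_le {P P' : ℝ → ℝ → F →L[ℝ] V} {l l' : ℝ}
    (hP' : HolderBound α T j K P') (hPP' : HolderBound α T j l (P - P'))
    (hZ : HolderBound α T k K' Z) (hZZ' : HolderBound α T k l' (Z - Z')) (hα : 0 ≤ α) {s u t : ℝ}
    (hs : 0 ≤ s) (hsu : s < u) (hut : u < t) (ht : t ≤ T) :
    ‖P s u (Z u t) - P' s u (Z' u t)‖ ≤ (l * K' + K * l') * ((t - s) ^ α) ^ (j + k) := by
  have hsplit : P s u (Z u t) - P' s u (Z' u t) =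
      (P - P') s u (Z u t) + P' s u ((Z - Z') u t) := by simp
  rw [hsplit, add_mul]
  exact norm_add_le_of_le (hPP'.norm_apply_le hZ hα hs hsu hut ht)
    (hP'.norm_apply_le hZZ' hα hs hsu hut ht)

end HolderBound

lemma BddContDiff.norm_comp_sub_le [NormedSpace ℝ F] [NormedSpace ℝ V] {g : F → V}
    (hg : BddContDiff 1 N g) {Y Y' : ℝ → F} {z : ℝ} (hz : ∀ t ∈ Set.Icc 0 T, ‖Y t - Y' t‖ ≤ z) :
    ∀ t ∈ Set.Icc 0 T, ‖g (Y t) - g (Y' t)‖ ≤ N * z := fun t ht =>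
  (hg.lipschitz _ _).trans (mul_le_mul_of_nonneg_left (hz t ht) hg.bound_nonneg)

lemma BddContDiff.holderBound_comp [NormedSpace ℝ F] [NormedSpace ℝ V] {g : F → V}
    (hg : BddContDiff 1 N g) {Y : ℝ → F} (hY : HolderBound α T n K (increment Y)) :
    HolderBound α T n (N * K) (increment fun t => g (Y t)) := fun s t hs hst ht =>
  calc ‖g (Y t) - g (Y s)‖ ≤ N * ‖Y t - Y s‖ := hg.lipschitz _ _
    _ ≤ N * (K * ((t - s) ^ α) ^ n) := mul_le_mul_of_nonneg_left (hY hs hst ht) hg.bound_nonneg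
    _ = _ := (mul_assoc _ _ _).symm

lemma BddContDiff.holderBound_comp_sub [NormedSpace ℝ F] [NormedSpace ℝ V] {g : F → V}
    (hg : BddContDiff 2 N g) {Y Y' : ℝ → F} {z : ℝ} (hz : ∀ t ∈ Set.Icc 0 T, ‖Y t - Y' t‖ ≤ z)
    (hY : HolderBound α T n K (increment Y))
    (hYY' : HolderBound α T n K' (increment Y - increment Y')) :
    HolderBound α T n (N * (K * z + K'))
      ((increment fun t => g (Y t)) - increment fun t => g (Y' t)) := by
  intro s t hs hst ht
  have hbase : ‖Y s - Y' s‖ ≤ z := hz s ⟨hs, hst.le.trans ht⟩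
  calc ‖(g (Y t) - g (Y s)) - (g (Y' t) - g (Y' s))‖
      ≤ N * (‖Y t - Y s‖ * ‖Y s - Y' s‖ + ‖(Y t - Y s) - (Y' t - Y' s)‖) :=
        hg.norm_second_difference_le _ _ _ _
    _ ≤ N * (K * ((t - s) ^ α) ^ n * z + K' * ((t - s) ^ α) ^ n) :=
        mul_le_mul_of_nonneg_left
          (add_le_add (mul_le_mul (hY hs hst ht) hbase (norm_nonneg _)
            ((norm_nonneg _).trans (hY hs hst ht))) (hYY' hs hst ht)) hg.bound_nonneg
    _ = _ := by ring

lemma BddContDiff.holderBound_taylorRem [NormedSpace ℝ F] [NormedSpace ℝ V] {g : F → V}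
    (hg : BddContDiff 2 N g) {Y : ℝ → F} (hY : HolderBound α T 1 K (increment Y)) :
    HolderBound α T 2 (N * K ^ 2) (fun s t => taylorRem g (Y s) (increment Y s t)) := by
  intro s t hs hst ht
  have hN : 0 ≤ N := hg.bound_nonneg
  calc ‖taylorRem g (Y s) (increment Y s t)‖ ≤ N * ‖increment Y s t‖ ^ 2 := hg.norm_taylorRem_le _ _
    _ ≤ N * (K * ((t - s) ^ α) ^ 1) ^ 2 := by gcongr; exact hY hs hst ht
    _ = _ := by ring

lemma BddContDiff.holderBound_taylorRem_sub [NormedSpace ℝ F] [NormedSpace ℝ V] {g : F → V}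
    (hg : BddContDiff 3 N g) {Y Y' : ℝ → F} {z : ℝ} (hz : ∀ t ∈ Set.Icc 0 T, ‖Y t - Y' t‖ ≤ z)
    (hY : HolderBound α T 1 K (increment Y)) (hY' : HolderBound α T 1 K (increment Y'))
    (hYY' : HolderBound α T 1 K' (increment Y - increment Y')) :
    HolderBound α T 2 (N * (K ^ 2 * z + 2 * K * K'))
      ((fun s t => taylorRem g (Y s) (increment Y s t)) -
        fun s t => taylorRem g (Y' s) (increment Y' s t)) := by
  intro s t hs hst ht
  have hN : 0 ≤ N := hg.bound_nonneg
  have hnorm := hY hs hst ht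
  have hnorm' := hY' hs hst ht
  have hbound : 0 ≤ K * ((t - s) ^ α) ^ 1 := (norm_nonneg _).trans hnorm
  calc ‖taylorRem g (Y s) (increment Y s t) - taylorRem g (Y' s) (increment Y' s t)‖
      ≤ N * (‖increment Y s t‖ ^ 2 * ‖Y s - Y' s‖ +
          (‖increment Y s t‖ + ‖increment Y' s t‖) * ‖increment Y s t - increment Y' s t‖) :=
        hg.norm_taylorRem_sub_le _ _ _ _
    _ ≤ N * ((K * ((t - s) ^ α) ^ 1) ^ 2 * z +
          (K * ((t - s) ^ α) ^ 1 + K * ((t - s) ^ α) ^ 1) * (K' * ((t - s) ^ α) ^ 1)) := by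
        gcongr
        · exact hz s ⟨hs, hst.le.trans ht⟩
        · exact hYY' hs hst ht
    _ = _ := by ring

lemma two_mul_mem_of_absorption {S : Set ℝ} (hclosed : IsClosed S) (hupper : IsUpperSet S)
    (hne : S.Nonempty) {c : ℝ} (hc : 0 ≤ c) (habsorb : ∀ K ∈ S, 0 ≤ K → c + K / 2 ∈ S) :
    2 * c ∈ S := by
  obtain ⟨K, hK⟩ := hne
  have hbdd : BddBelow (S ∩ Set.Ici 0) := ⟨0, fun _ hx => hx.2⟩
  have hinf : sInf (S ∩ Set.Ici 0) ∈ S ∩ Set.Ici 0 :=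
    (hclosed.inter isClosed_Ici).csInf_mem
      ⟨max K 0, hupper (le_max_left K 0) hK, le_max_right K 0⟩ hbdd
  set K₀ := sInf (S ∩ Set.Ici 0)
  have hK₀ : 0 ≤ K₀ := hinf.2
  have hle : K₀ ≤ c + K₀ / 2 :=
    csInf_le hbdd ⟨habsorb K₀ hinf.1 hK₀, add_nonneg hc (div_nonneg hK₀ zero_le_two)⟩
  exact hupper (by linarith) hinf.1

lemma sSup_holderRatios_nonneg (X : ℝ → F) : 0 ≤ sSup (holderRatios α T X) := by
  refine Real.sSup_nonneg ?_
  rintro _ ⟨s, t, -, hst, -, rfl⟩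
  exact div_nonneg (norm_nonneg _) (Real.rpow_nonneg (sub_pos.mpr hst).le α)

lemma sSup_holderRatios2_nonneg (Z : ℝ → ℝ → F) : 0 ≤ sSup (holderRatios2 α T Z) := by
  refine Real.sSup_nonneg ?_
  rintro _ ⟨s, t, -, -, -, -, -, rfl⟩
  positivity

lemma holderBound_of_bddAbove_holderRatios {X : ℝ → F} (hX : BddAbove (holderRatios α T X)) :
    HolderBound α T 1 (sSup (holderRatios α T X)) (increment X) := by
  intro s t hs hst ht
  rw [pow_one, ← div_le_iff₀ (Real.rpow_pos_of_pos (sub_pos.mpr hst) α)]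
  exact le_csSup hX ⟨s, t, hs, hst, ht, rfl⟩

lemma holderBound_of_bddAbove_holderRatios2 (hZ : BddAbove (holderRatios2 α T Z)) :
    HolderBound α T 2 (sSup (holderRatios2 α T Z)) Z := by
  intro s t hs hst ht
  have hst' : 0 < t - s := sub_pos.mpr hst
  have hpow : ((t - s) ^ α) ^ 2 = |t - s| ^ (2 * α) := by
    rw [abs_of_pos hst', mul_comm]
    exact_mod_cast (Real.rpow_mul_natCast hst'.le α 2).symm
  rw [hpow, ← div_le_iff₀ (Real.rpow_pos_of_pos (abs_pos.mpr hst'.ne') _)]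
  exact le_csSup hZ ⟨s, t, hs, by linarith, by linarith, ht, hst.ne, rfl⟩

lemma bddAbove_holderRatios_sub {X X' : ℝ → F} (hX : BddAbove (holderRatios α T X))
    (hX' : BddAbove (holderRatios α T X')) :
    BddAbove (holderRatios α T fun t => X t - X' t) := by
  have hsub := (holderBound_of_bddAbove_holderRatios hX).sub
    (holderBound_of_bddAbove_holderRatios hX')
  rw [increment_sub_increment] at hsub
  refine ⟨sSup (holderRatios α T X) + sSup (holderRatios α T X'), ?_⟩
  rintro _ ⟨s, t, hs, hst, ht, rfl⟩
  rw [div_le_iff₀ (Real.rpow_pos_of_pos (sub_pos.mpr hst) α)]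
  exact (hsub hs hst ht).trans_eq (by rw [pow_one])

lemma bddAbove_holderRatios2_sub (hZ : BddAbove (holderRatios2 α T Z))
    (hZ' : BddAbove (holderRatios2 α T Z')) :
    BddAbove (holderRatios2 α T fun s t => Z s t - Z' s t) := by
  obtain ⟨K, hK⟩ := hZ
  obtain ⟨K', hK'⟩ := hZ'
  refine ⟨K + K', ?_⟩
  rintro _ ⟨s, t, hs, ht, hsT, htT, hst, rfl⟩
  calc ‖Z s t - Z' s t‖ / |t - s| ^ (2 * α)
      ≤ ‖Z s t‖ / |t - s| ^ (2 * α) + ‖Z' s t‖ / |t - s| ^ (2 * α) := by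
        rw [← add_div]
        gcongr
        exact norm_sub_le _ _
    _ ≤ K + K' := add_le_add (hK ⟨s, t, hs, ht, hsT, htT, hst, rfl⟩)
        (hK' ⟨s, t, hs, ht, hsT, htT, hst, rfl⟩)

end HolderBounds

section Sewing

variable {E : Type*} [NormedAddCommGroup E] {A B : ℝ → ℝ → E} {Y Y' : ℝ → E}
  {α T K δ δ' a b c : ℝ} {n : ℕ} {v w : E}

/-- `IsRiemannSum A δ a b v`: `v` is the sum of `A` over a partition of `[a,b]` of mesh at
most `δ`. -/
inductive IsRiemannSum (A : ℝ → ℝ → E) (δ a : ℝ) : ℝ → E → Prop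
  | nil : IsRiemannSum A δ a a 0
  | snoc {b c : ℝ} {v : E} (hv : IsRiemannSum A δ a b v) (hbc : b < c) (hδ : c - b ≤ δ) :
      IsRiemannSum A δ a c (v + A b c)

namespace IsRiemannSum

lemma single (hab : a < b) (hδ : b - a ≤ δ) : IsRiemannSum A δ a b (A a b) := by
  simpa using nil.snoc (A := A) hab hδ

lemma append (hv : IsRiemannSum A δ a b v) (hw : IsRiemannSum A δ b c w) :
    IsRiemannSum A δ a c (v + w) := by
  induction hw with
  | nil => simpa using hv
  | snoc _ hbc hδ ih => simpa only [add_assoc] using ih.snoc hbc hδ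

lemma mono (hv : IsRiemannSum A δ a b v) (hδ : δ ≤ δ') : IsRiemannSum A δ' a b v := by
  induction hv with
  | nil => exact nil
  | snoc _ hbc hmesh ih => exact ih.snoc hbc (hmesh.trans hδ)

lemma exists_partition (hv : IsRiemannSum A δ a b v) :
    ∃ (k : ℕ) (τ : ℕ → ℝ), τ 0 = a ∧ τ k = b ∧ (∀ i < k, τ i < τ (i + 1)) ∧
      (∀ i < k, τ (i + 1) - τ i ≤ δ) ∧ ∑ i ∈ Finset.range k, A (τ i) (τ (i + 1)) = v := by
  induction hv with
  | nil => exact ⟨0, fun _ => a, by simp⟩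
  | @snoc b c v _ hbc hmesh ih =>
    obtain ⟨k, τ, hτ₀, rfl, hlt, hle, rfl⟩ := ih
    have hlast : Function.update τ (k + 1) c (k + 1) = c := Function.update_self ..
    have hinit : ∀ i ≤ k, Function.update τ (k + 1) c i = τ i := fun i hi =>
      Function.update_of_ne (by lia) ..
    refine ⟨k + 1, Function.update τ (k + 1) c, (hinit 0 k.zero_le).trans hτ₀, hlast,
      fun i hi => ?_, fun i hi => ?_, ?_⟩
    · rcases (Nat.lt_succ_iff.mp hi).eq_or_lt with rfl | hik
      · rwa [hlast, hinit i le_rfl]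
      · rw [hinit i hik.le, hinit (i + 1) hik]
        exact hlt i hik
    · rcases (Nat.lt_succ_iff.mp hi).eq_or_lt with rfl | hik
      · rwa [hlast, hinit i le_rfl]
      · rw [hinit i hik.le, hinit (i + 1) hik]
        exact hle i hik
    · rw [Finset.sum_range_succ, hlast, hinit k le_rfl]
      refine congrArg (· + A (τ k) c) (Finset.sum_congr rfl fun i hi => ?_)
      have hik : i < k := Finset.mem_range.mp hi
      rw [hinit i hik.le, hinit (i + 1) hik]

end IsRiemannSum

/-- The Riemann sum of `A` over the partition of `[a,b]` into `2^n` intervals of equal length. -/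
def dyadicSum (A : ℝ → ℝ → E) : ℕ → ℝ → ℝ → E
  | 0, a, b => A a b
  | n + 1, a, b => dyadicSum A n a ((a + b) / 2) + dyadicSum A n ((a + b) / 2) b

lemma isRiemannSum_dyadicSum (hab : a < b) (hδ : (b - a) / 2 ^ n ≤ δ) :
    IsRiemannSum A δ a b (dyadicSum A n a b) := by
  induction n generalizing a b with
  | zero => exact .single hab (by simpa using hδ)
  | succ n ih =>
    have hmesh : (b - a) / 2 / 2 ^ n ≤ δ := by rwa [div_div, ← pow_succ']
    refine (ih (left_lt_add_div_two.mpr hab) ?_).append (ih (add_div_two_lt_right.mpr hab) ?_)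
    · rwa [show (a + b) / 2 - a = (b - a) / 2 by ring]
    · rwa [show b - (a + b) / 2 = (b - a) / 2 by ring]

lemma eventually_isRiemannSum_dyadicSum (hδ : 0 < δ) (hab : a < b) :
    ∀ᶠ n in Filter.atTop, IsRiemannSum A δ a b (dyadicSum A n a b) := by
  have hmesh : Filter.Tendsto (fun n : ℕ => (b - a) / 2 ^ n) Filter.atTop (nhds 0) :=
    tendsto_const_nhds.div_atTop (tendsto_pow_atTop_atTop_of_one_lt one_lt_two)
  filter_upwards [hmesh.eventually (gt_mem_nhds hδ)] with n hn
  exact isRiemannSum_dyadicSum hab hn.le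

lemma exists_isRiemannSum (hδ : 0 < δ) (hab : a ≤ b) : ∃ v, IsRiemannSum A δ a b v := by
  rcases hab.eq_or_lt with rfl | hab
  · exact ⟨0, .nil⟩
  · exact (eventually_isRiemannSum_dyadicSum hδ hab).exists.imp' _ fun _ => id

lemma dyadicSum_sub (A B : ℝ → ℝ → E) (n : ℕ) (a b : ℝ) :
    dyadicSum (A - B) n a b = dyadicSum A n a b - dyadicSum B n a b := by
  induction n generalizing a b with
  | zero => rfl
  | succ n ih => simp only [dyadicSum, ih, add_sub_add_comm]

/-- `Y t = ∫₀ᵗ A` for all `t ∈ [0,T]`, as a limit of Riemann sums as the mesh tends to `0`. -/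
def HasRiemannIntegral (T : ℝ) (A : ℝ → ℝ → E) (Y : ℝ → E) : Prop :=
  ∀ t ∈ Set.Icc 0 T, ∀ ε > 0, ∃ δ > 0, ∀ v : E, IsRiemannSum A δ 0 t v → ‖v - Y t‖ ≤ ε

/-- The increments of `Y` on `[0,T]` are the limits of the dyadic Riemann sums of `A`. -/
def IsDyadicLimit (T : ℝ) (A : ℝ → ℝ → E) (Y : ℝ → E) : Prop :=
  ∀ ⦃s t⦄, 0 ≤ s → s < t → t ≤ T →
    Filter.Tendsto (fun n => dyadicSum A n s t) Filter.atTop (nhds (increment Y s t))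

lemma HasRiemannIntegral.apply_zero (h : HasRiemannIntegral T A Y) (hT : 0 ≤ T) : Y 0 = 0 := by
  refine norm_le_zero_iff.mp (le_of_forall_pos_le_add fun ε hε => ?_)
  obtain ⟨δ, -, hδ⟩ := h 0 ⟨le_rfl, hT⟩ ε hε
  simpa using hδ 0 .nil

lemma HasRiemannIntegral.isDyadicLimit (h : HasRiemannIntegral T A Y) :
    IsDyadicLimit T A Y := by
  intro s t hs hst ht
  rw [Metric.tendsto_nhds]
  intro ε hε
  obtain ⟨δ₁, hδ₁, hsum_s⟩ := h s ⟨hs, hst.le.trans ht⟩ (ε / 3) (by linarith)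
  obtain ⟨δ₂, hδ₂, hsum_t⟩ := h t ⟨hs.trans hst.le, ht⟩ (ε / 3) (by linarith)
  have hδ : 0 < min δ₁ δ₂ := lt_min hδ₁ hδ₂
  obtain ⟨w, hw⟩ := exists_isRiemannSum (A := A) hδ hs
  filter_upwards [eventually_isRiemannSum_dyadicSum (A := A) hδ hst] with n hn
  rw [dist_eq_norm]
  calc ‖dyadicSum A n s t - increment Y s t‖
      = ‖(w + dyadicSum A n s t - Y t) - (w - Y s)‖ := by rw [increment]; congr 1; abel
    _ ≤ ε / 3 + ε / 3 := norm_sub_le_of_le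
        (hsum_t _ ((hw.append hn).mono (min_le_right _ _))) (hsum_s w (hw.mono (min_le_left _ _)))
    _ < ε := by linarith

lemma IsDyadicLimit.of_sub_const (h : IsDyadicLimit T A fun t => Y t - v) :
    IsDyadicLimit T A Y := fun s t hs hst ht => by
  simpa only [increment, sub_sub_sub_cancel_right] using h hs hst ht

lemma IsDyadicLimit.sub (hY : IsDyadicLimit T A Y) (hY' : IsDyadicLimit T B Y') :
    IsDyadicLimit T (A - B) (Y - Y') := fun s t hs hst ht => by
  rw [← increment_sub_increment, Pi.sub_apply, Pi.sub_apply]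
  simpa only [dyadicSum_sub] using (hY hs hst ht).sub (hY' hs hst ht)

/-- The failure of additivity of `A` is of Hölder order `nα` on `[0,T]` with constant `K`. -/
def DefectBound (α T : ℝ) (n : ℕ) (K : ℝ) (A : ℝ → ℝ → E) : Prop :=
  ∀ ⦃s u t⦄, 0 ≤ s → s < u → u < t → t ≤ T →
    ‖A s t - A s u - A u t‖ ≤ K * ((t - s) ^ α) ^ n

/-- The sum of the geometric series of ratio `2 ^ (1 - nα)`, the constant of the sewing lemma. -/
def sewingConst (α : ℝ) (n : ℕ) : ℝ := (1 - 2 * ((1 / 2 : ℝ) ^ α) ^ n)⁻¹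

lemma two_mul_half_rpow_pow_lt_one (hα : 1 < n * α) : 2 * ((1 / 2 : ℝ) ^ α) ^ n < 1 := by
  have hlt : (1 / 2 : ℝ) ^ (α * n) < (1 / 2) ^ (1 : ℝ) :=
    Real.rpow_lt_rpow_of_exponent_gt (by norm_num) (by norm_num) (by linarith)
  rw [← Real.rpow_mul_natCast (by norm_num)]
  linarith [Real.rpow_one (1 / 2 : ℝ)]

-- `sewingConst` is the fixed point of `c ↦ 2 * c * ((1 / 2) ^ α) ^ n + 1`, so the bound propagates
-- unchanged through every bisection.
lemma norm_dyadicSum_sub_le (hα : 1 < n * α) (hA : DefectBound α T n K A) (m : ℕ) {s t : ℝ}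
    (hs : 0 ≤ s) (hst : s < t) (ht : t ≤ T) :
    ‖dyadicSum A m s t - A s t‖ ≤ sewingConst α n * K * ((t - s) ^ α) ^ n := by
  have hratio := two_mul_half_rpow_pow_lt_one hα
  set θ : ℝ := ((1 / 2 : ℝ) ^ α) ^ n
  induction m generalizing s t with
  | zero =>
    have hdefect := (norm_nonneg _).trans
      (hA hs (left_lt_add_div_two.mpr hst) (add_div_two_lt_right.mpr hst) ht)
    rw [dyadicSum, sub_self, norm_zero, mul_assoc]
    exact mul_nonneg (inv_nonneg.mpr (sub_nonneg.mpr hratio.le)) hdefect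
  | succ m ih =>
    set u := (s + t) / 2 with hu
    have hsu : s < u := left_lt_add_div_two.mpr hst
    have hut : u < t := add_div_two_lt_right.mpr hst
    have hleft := ih hs hsu (hut.le.trans ht)
    have hright := ih (hs.trans hsu.le) hut ht
    have hhalf : (((t - s) / 2) ^ α) ^ n = θ * ((t - s) ^ α) ^ n := by
      rw [div_eq_inv_mul, ← one_div, Real.mul_rpow (by norm_num) (sub_pos.mpr hst).le, mul_pow]
    rw [show u - s = (t - s) / 2 by ring, hhalf] at hleft
    rw [show t - u = (t - s) / 2 by ring, hhalf] at hright
    have hfixed : sewingConst α n * (1 - 2 * θ) = 1 := inv_mul_cancel₀ (by linarith)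
    calc ‖dyadicSum A (m + 1) s t - A s t‖
        = ‖(dyadicSum A m s u - A s u) + (dyadicSum A m u t - A u t) -
            (A s t - A s u - A u t)‖ := by
          congr 1; simp only [dyadicSum, ← hu]; abel
      _ ≤ sewingConst α n * K * (θ * ((t - s) ^ α) ^ n) +
            sewingConst α n * K * (θ * ((t - s) ^ α) ^ n) + K * ((t - s) ^ α) ^ n :=
          norm_sub_le_of_le (norm_add_le_of_le hleft hright) (hA hs hsu hut ht)
      _ = sewingConst α n * K * ((t - s) ^ α) ^ n := by
          linear_combination -(K * ((t - s) ^ α) ^ n) * hfixed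

lemma IsDyadicLimit.holderBound_increment_sub (hα : 1 < n * α) (hY : IsDyadicLimit T A Y)
    (hA : DefectBound α T n K A) :
    HolderBound α T n (sewingConst α n * K) (increment Y - A) := fun s t hs hst ht =>
  le_of_tendsto ((hY hs hst ht).sub_const (A s t)).norm
    (Filter.Eventually.of_forall fun m => norm_dyadicSum_sub_le hα hA m hs hst ht)

end Sewing

section RoughDifferentialEquations

-- Needed to find the norms of nested spaces of continuous linear maps.
set_option maxSynthPendingDepth 3

variable {V W E : Type*} [NormedAddCommGroup V] [NormedSpace ℝ V] [NormedAddCommGroup W]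
  [NormedSpace ℝ W] [NormedAddCommGroup E] [NormedSpace ℝ E]

/-- The vector field `Df · f`, which multiplies the second level of the rough path. -/
def secondField (f : E → V →L[ℝ] E) (y : E) : V →L[ℝ] V →L[ℝ] E := (fderiv ℝ f y).comp (f y)

/-- Davie's local expansion `f(Y_s) X_{s,t} + (Df · f)(Y_s) 𝕏_{s,t}` of the solution of
`dY = f(Y) d𝐗`, where `κ` lets bilinear maps act on the space `W` of second levels. -/
def davieGerm (κ : (V →L[ℝ] V →L[ℝ] E) →L[ℝ] W →L[ℝ] E) (f : E → V →L[ℝ] E) (X : ℝ → V)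
    (𝕏 : ℝ → ℝ → W) (Y : ℝ → E) (s t : ℝ) : E :=
  f (Y s) (increment X s t) + κ (secondField f (Y s)) (𝕏 s t)

/-- The remainder of `Y` as a path controlled by `X` with Gubinelli derivative `f ∘ Y`. -/
def controlledRem (f : E → V →L[ℝ] E) (X : ℝ → V) (Y : ℝ → E) (s t : ℝ) : E :=
  increment Y s t - f (Y s) (increment X s t)

/-- The remainder of `f ∘ Y` as a path controlled by `X` with Gubinelli derivative
`(Df · f) ∘ Y`. -/
def coeffRem (f : E → V →L[ℝ] E) (X : ℝ → V) (Y : ℝ → E) (s t : ℝ) : V →L[ℝ] E :=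
  increment (fun t => f (Y t)) s t - secondField f (Y s) (increment X s t)

/-- Chen's relation on `[0,T]`, tested against all bilinear maps through the pairing `κ`. -/
def ChenRelation (κ : (V →L[ℝ] V →L[ℝ] E) →L[ℝ] W →L[ℝ] E) (T : ℝ) (X : ℝ → V)
    (𝕏 : ℝ → ℝ → W) : Prop :=
  ∀ ⦃s u t⦄, 0 ≤ s → s < u → u < t → t ≤ T → ∀ B,
    κ B (𝕏 s t) = κ B (𝕏 s u) + κ B (𝕏 u t) + B (increment X s u) (increment X u t)

/-- A single constant `N ≥ 1` for everything in the equation but the rough path: the vector field,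
the pairing and the sewing lemma. -/
structure CoeffBound (α : ℝ) (κ : (V →L[ℝ] V →L[ℝ] E) →L[ℝ] W →L[ℝ] E) (f : E → V →L[ℝ] E)
    (N : ℝ) : Prop where
  one_le : 1 ≤ N
  sewingConst_le : sewingConst α 3 ≤ N
  norm_pairing_le : ‖κ‖ ≤ N
  field : BddContDiff 3 N f
  second_field : BddContDiff 2 N (secondField f)

/-- Chen's relation on `[0,T]`, with a common Hölder constant `N` for the two levels. -/
structure RoughBound (κ : (V →L[ℝ] V →L[ℝ] E) →L[ℝ] W →L[ℝ] E) (α T N : ℝ) (X : ℝ → V)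
    (𝕏 : ℝ → ℝ → W) : Prop where
  chen : ChenRelation κ T X 𝕏
  path : HolderBound α T 1 N (increment X)
  area : HolderBound α T 2 N 𝕏

/-- The path `Y` is driven by `(X, 𝕏)` on `[0,T]`, with a common Hölder constant `Q` for the two
levels of the rough path, for `Y` and for its controlled remainder. -/
structure SolutionBound (κ : (V →L[ℝ] V →L[ℝ] E) →L[ℝ] W →L[ℝ] E) (f : E → V →L[ℝ] E) (α T Q : ℝ)
    (X : ℝ → V) (𝕏 : ℝ → ℝ → W) (Y : ℝ → E) : Prop extends RoughBound κ α T Q X 𝕏 where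
  limit : IsDyadicLimit T (davieGerm κ f X 𝕏 Y) Y
  solution : HolderBound α T 1 Q (increment Y)
  remainder : HolderBound α T 2 Q (controlledRem f X Y)

/-- A common constant `r` for the differences between the data of two equations: the two levels of
the rough path and the initial value. -/
structure DataClose (α T r : ℝ) (X X' : ℝ → V) (𝕏 𝕏' : ℝ → ℝ → W) (Y Y' : ℝ → E) : Prop where
  path : HolderBound α T 1 r (increment X - increment X')
  area : HolderBound α T 2 r (𝕏 - 𝕏')
  start : ‖Y 0 - Y' 0‖ ≤ r

/-- A common constant `m` for all the differences between two solutions and their drivers. -/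
structure SolutionsClose (f : E → V →L[ℝ] E) (α T m : ℝ) (X X' : ℝ → V) (𝕏 𝕏' : ℝ → ℝ → W)
    (Y Y' : ℝ → E) : Prop where
  path : HolderBound α T 1 m (increment X - increment X')
  area : HolderBound α T 2 m (𝕏 - 𝕏')
  norm_sub_le : ∀ t ∈ Set.Icc 0 T, ‖Y t - Y' t‖ ≤ m
  solution : HolderBound α T 1 m (increment Y - increment Y')
  remainder : HolderBound α T 2 m (controlledRem f X Y - controlledRem f X' Y')

variable {κ : (V →L[ℝ] V →L[ℝ] E) →L[ℝ] W →L[ℝ] E} {f : E → V →L[ℝ] E} {α T N Q ρ m r w : ℝ}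
  {X X' : ℝ → V} {𝕏 𝕏' : ℝ → ℝ → W} {Y Y' : ℝ → E}

lemma BddContDiff.exists_coeffBound (hf : BddContDiff 3 N f) (α : ℝ)
    (κ : (V →L[ℝ] V →L[ℝ] E) →L[ℝ] W →L[ℝ] E) : ∃ N', CoeffBound α κ f N' := by
  have hsecond : BddContDiff 2 (2 ^ 2 * (N * N)) (secondField f) :=
    hf.fderiv_right.clm_comp (hf.of_le (by norm_num))
  refine ⟨max (max 1 (sewingConst α 3)) (max ‖κ‖ (max N (2 ^ 2 * (N * N)))), ?_, ?_, ?_,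
    hf.mono ?_, hsecond.mono ?_⟩ <;> simp

lemma CoeffBound.mono (hf : CoeffBound α κ f N) (hN : N ≤ Q) : CoeffBound α κ f Q :=
  ⟨hf.one_le.trans hN, hf.sewingConst_le.trans hN, hf.norm_pairing_le.trans hN,
    hf.field.mono hN, hf.second_field.mono hN⟩

lemma RoughBound.mono (hX : RoughBound κ α T N X 𝕏) (hN : N ≤ Q) : RoughBound κ α T Q X 𝕏 :=
  ⟨hX.chen, hX.path.mono hN, hX.area.mono hN⟩

lemma CoeffBound.norm_pairing_secondField_le (hf : CoeffBound α κ f N) (y : E) :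
    ‖κ (secondField f y)‖ ≤ N * N :=
  κ.le_of_opNorm_le_of_le hf.norm_pairing_le (hf.second_field.norm_apply_le y)

lemma ChenRelation.davieGerm_defect (hX : ChenRelation κ T X 𝕏) {s u t : ℝ} (hs : 0 ≤ s)
    (hsu : s < u) (hut : u < t) (ht : t ≤ T) :
    davieGerm κ f X 𝕏 Y s t - davieGerm κ f X 𝕏 Y s u - davieGerm κ f X 𝕏 Y u t =
      -(coeffRem f X Y s u (increment X u t) +
        κ (increment (fun t => secondField f (Y t)) s u) (𝕏 u t)) := by
  have hincr : increment X s t = increment X s u + increment X u t :=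
    (sub_add_sub_cancel' (X u) (X s) (X t)).symm
  have hincr_coeff : increment (fun t => f (Y t)) s u = f (Y u) - f (Y s) := rfl
  have hincr_second : increment (fun t => secondField f (Y t)) s u =
      secondField f (Y u) - secondField f (Y s) := rfl
  simp only [davieGerm, coeffRem, hX hs hsu hut ht, hincr, hincr_coeff, hincr_second, map_add,
    map_sub, sub_apply]
  abel

lemma controlledRem_eq_increment_sub_davieGerm_add :
    controlledRem f X Y =
      (increment Y - davieGerm κ f X 𝕏 Y) + fun s t => κ (secondField f (Y s)) (𝕏 s t) := by
  funext s t
  simp only [controlledRem, davieGerm, Pi.add_apply, Pi.sub_apply]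
  abel

lemma increment_eq_controlledRem_add :
    increment Y = controlledRem f X Y + fun s t => f (Y s) (increment X s t) := by
  funext s t
  exact (sub_add_cancel _ _).symm

lemma coeffRem_eq_taylorRem_add :
    coeffRem f X Y = (fun s t => taylorRem f (Y s) (increment Y s t)) +
      fun s t => fderiv ℝ f (Y s) (controlledRem f X Y s t) := by
  funext s t
  simp only [Pi.add_apply, coeffRem, taylorRem, controlledRem, secondField, increment, map_sub,
    ContinuousLinearMap.comp_apply, add_sub_cancel]
  abel

/-! ### A priori bound on the remainder -/

lemma holderBound_increment_of_controlledRem (hα : 0 ≤ α) (hf : CoeffBound α κ f N)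
    (hX : RoughBound κ α T N X 𝕏) (hR : HolderBound α T 2 ρ (controlledRem f X Y)) :
    HolderBound α T 1 (ρ * T ^ α + N * N) (increment Y) := by
  rw [increment_eq_controlledRem_add (f := f) (X := X)]
  exact (hR.lower hα).add (hX.path.clm_apply fun s => hf.field.norm_apply_le (Y s))

-- Expanding at `f(Y_s) X_{s,t}` rather than at `Y_{s,t}` keeps the bound linear in `ρ`.
lemma holderBound_coeffRem_of_controlledRem (hf : CoeffBound α κ f N)
    (hX : RoughBound κ α T N X 𝕏) (hR : HolderBound α T 2 ρ (controlledRem f X Y)) :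
    HolderBound α T 2 (N ^ 5 + N * ρ) (coeffRem f X Y) := by
  intro s t hs hst ht
  have hN : 0 ≤ N := hf.field.bound_nonneg
  set x : E := f (Y s) (increment X s t) with hx
  have hfX : ‖x‖ ≤ N * (N * ((t - s) ^ α) ^ 1) :=
    (f (Y s)).le_of_opNorm_le_of_le (hf.field.norm_apply_le _) (hX.path hs hst ht)
  have hsplit : coeffRem f X Y s t = taylorRem f (Y s) x + (f (Y t) - f (Y s + x)) := by
    simp only [coeffRem, taylorRem, increment, secondField, ContinuousLinearMap.comp_apply, hx]
    abel
  have htaylor : ‖taylorRem f (Y s) x‖ ≤ N * (N * (N * ((t - s) ^ α) ^ 1)) ^ 2 :=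
    ((hf.field.of_le (by norm_num)).norm_taylorRem_le _ _).trans (by gcongr)
  have hshift : ‖f (Y t) - f (Y s + x)‖ ≤ N * (ρ * ((t - s) ^ α) ^ 2) := by
    refine ((hf.field.of_le (by norm_num)).lipschitz _ _).trans ?_
    rw [← sub_sub]
    exact mul_le_mul_of_nonneg_left (hR hs hst ht) hN
  calc ‖coeffRem f X Y s t‖
      ≤ N * (N * (N * ((t - s) ^ α) ^ 1)) ^ 2 + N * (ρ * ((t - s) ^ α) ^ 2) :=
        hsplit ▸ norm_add_le_of_le htaylor hshift
    _ = (N ^ 5 + N * ρ) * ((t - s) ^ α) ^ 2 := by ring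

lemma defectBound_davieGerm (hα : 0 ≤ α) (hT : T ^ α ≤ 1) (hρ : 0 ≤ ρ)
    (hf : CoeffBound α κ f N) (hX : RoughBound κ α T N X 𝕏)
    (hR : HolderBound α T 2 ρ (controlledRem f X Y)) :
    DefectBound α T 3 (2 * N ^ 6 * (1 + ρ)) (davieGerm κ f X 𝕏 Y) := by
  intro s u t hs hsu hut ht
  have hN : 1 ≤ N := hf.one_le
  have hTα : 0 ≤ T ^ α := Real.rpow_nonneg (by linarith) α
  have hsecond := ((hf.second_field.of_le one_le_two).holderBound_comp
    (holderBound_increment_of_controlledRem hα hf hX hR)).clm_apply fun _ => hf.norm_pairing_le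
  have hpath := (holderBound_coeffRem_of_controlledRem hf hX hR).norm_apply_le
    hX.path hα hs hsu hut ht
  have harea := hsecond.norm_apply_le hX.area hα hs hsu hut ht
  have hpow : 0 ≤ ((t - s) ^ α) ^ 3 := pow_nonneg (Real.rpow_nonneg (by linarith) α) 3
  have hconst : (N ^ 5 + N * ρ) * N + N * (N * (ρ * T ^ α + N * N)) * N ≤
      2 * N ^ 6 * (1 + ρ) := by
    have h₁ : N ^ 2 * ρ ≤ N ^ 6 * ρ := by gcongr; norm_num
    have h₂ : N ^ 3 * (ρ * T ^ α) ≤ N ^ 6 * (ρ * 1) :=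
      mul_le_mul (pow_le_pow_right₀ hN (by norm_num)) (by gcongr)
        (mul_nonneg hρ hTα) (by positivity)
    have h₃ : N ^ 5 ≤ N ^ 6 := by gcongr; norm_num
    linarith
  rw [hX.chen.davieGerm_defect hs hsu hut ht, norm_neg]
  refine (norm_add_le_of_le hpath harea).trans ?_
  rw [← add_mul]
  exact mul_le_mul_of_nonneg_right hconst hpow

lemma holderBound_controlledRem_step (hα : 1 / 3 < α) (hT : 0 ≤ T) (hsmall : 4 * N ^ 7 * T ^ α ≤ 1)
    (hρ : 0 ≤ ρ) (hf : CoeffBound α κ f N) (hX : RoughBound κ α T N X 𝕏)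
    (hY : IsDyadicLimit T (davieGerm κ f X 𝕏 Y) Y)
    (hR : HolderBound α T 2 ρ (controlledRem f X Y)) :
    HolderBound α T 2 (3 / 2 * N ^ 3 + ρ / 2) (controlledRem f X Y) := by
  have hN : 1 ≤ N := hf.one_le
  have hTα : 0 ≤ T ^ α := Real.rpow_nonneg hT α
  have hT₁ : T ^ α ≤ 1 := by nlinarith [one_le_pow₀ hN (n := 7)]
  have hα₀ : 0 ≤ α := by linarith
  have hgerm := (hY.holderBound_increment_sub (by norm_num; linarith)
    (defectBound_davieGerm hα₀ hT₁ hρ hf hX hR)).lower hα₀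
  have harea := hX.area.clm_apply fun s => hf.norm_pairing_secondField_le (Y s)
  rw [controlledRem_eq_increment_sub_davieGerm_add (κ := κ) (𝕏 := 𝕏)]
  refine (hgerm.add harea).mono ?_
  calc sewingConst α 3 * (2 * N ^ 6 * (1 + ρ)) * T ^ α + N * N * N
      ≤ N * (2 * N ^ 6 * (1 + ρ)) * T ^ α + N * N * N := by gcongr; exact hf.sewingConst_le
    _ = 4 * N ^ 7 * T ^ α * ((1 + ρ) / 2) + N ^ 3 := by ring
    _ ≤ 1 * ((1 + ρ) / 2) + N ^ 3 := by gcongr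
    _ ≤ 3 / 2 * N ^ 3 + ρ / 2 := by linarith [one_le_pow₀ hN (n := 3)]

lemma holderBound_controlledRem (hα : 1 / 3 < α) (hT : 0 ≤ T) (hsmall : 4 * N ^ 7 * T ^ α ≤ 1)
    (hf : CoeffBound α κ f N) (hX : RoughBound κ α T N X 𝕏)
    (hY : IsDyadicLimit T (davieGerm κ f X 𝕏 Y) Y)
    (hR : HolderBound α T 2 ρ (controlledRem f X Y)) :
    HolderBound α T 2 (3 * N ^ 3) (controlledRem f X Y) := by
  have hN : 0 ≤ N := hf.field.bound_nonneg
  have habsorbed : HolderBound α T 2 (2 * (3 / 2 * N ^ 3)) (controlledRem f X Y) :=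
    two_mul_mem_of_absorption (isClosed_setOf_holderBound α T 2 (controlledRem f X Y))
      (fun _ _ hK h => h.mono hK) ⟨ρ, hR⟩ (by positivity)
      fun _ hK hK₀ => holderBound_controlledRem_step hα hT hsmall hK₀ hf hX hY hK
  exact habsorbed.mono (by linarith)

lemma solutionBound_of_isDyadicLimit (hα : 1 / 3 < α) (hT : 0 ≤ T)
    (hsmall : 4 * N ^ 7 * T ^ α ≤ 1) (hf : CoeffBound α κ f N) (hX : RoughBound κ α T N X 𝕏)
    (hY : IsDyadicLimit T (davieGerm κ f X 𝕏 Y) Y)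
    (hR : HolderBound α T 2 ρ (controlledRem f X Y)) :
    SolutionBound κ f α T (4 * N ^ 3) X 𝕏 Y := by
  have hN : 1 ≤ N := hf.one_le
  have hN₁ : N ≤ N ^ 3 := le_self_pow₀ hN (by norm_num)
  have hN₂ : N ^ 2 ≤ N ^ 3 := by gcongr; norm_num
  have hT₁ : T ^ α ≤ 1 := by nlinarith [one_le_pow₀ hN (n := 7), Real.rpow_nonneg hT α]
  have hrem := holderBound_controlledRem hα hT hsmall hf hX hY hR
  refine ⟨hX.mono (by linarith), hY,
    (holderBound_increment_of_controlledRem (by linarith) hf hX hrem).mono ?_,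
    hrem.mono (by linarith)⟩
  nlinarith

/-! ### Stability -/

lemma SolutionBound.holderBound_coeffRem (hf : CoeffBound α κ f Q)
    (hS : SolutionBound κ f α T Q X 𝕏 Y) : HolderBound α T 2 (2 * Q ^ 3) (coeffRem f X Y) := by
  have hpow : Q ^ 2 ≤ Q ^ 3 := pow_le_pow_right₀ hf.one_le (by norm_num)
  have htaylor := (hf.field.of_le (by norm_num)).holderBound_taylorRem hS.solution
  have hlinear := hS.remainder.clm_apply fun s =>
    (hf.field.of_le (by norm_num)).norm_fderiv_le (Y s)
  rw [coeffRem_eq_taylorRem_add]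
  exact (htaylor.add hlinear).mono (by linarith)

namespace SolutionsClose

lemma holderBound_coeffRem_sub (hc : SolutionsClose f α T m X X' 𝕏 𝕏' Y Y') (hT : 0 ≤ T)
    (hf : CoeffBound α κ f Q) (hS : SolutionBound κ f α T Q X 𝕏 Y)
    (hS' : SolutionBound κ f α T Q X' 𝕏' Y') :
    HolderBound α T 2 (5 * Q ^ 3 * m) (coeffRem f X Y - coeffRem f X' Y') := by
  have hm : 0 ≤ m := (norm_nonneg _).trans (hc.norm_sub_le 0 ⟨le_rfl, hT⟩)
  have htaylor := hf.field.holderBound_taylorRem_sub hc.norm_sub_le hS.solution hS'.solution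
    hc.solution
  have hfderiv : BddContDiff 2 Q (fderiv ℝ f) := hf.field.fderiv_right
  have hlinear := HolderBound.clm_apply_sub 
    ((hfderiv.of_le one_le_two).norm_comp_sub_le hc.norm_sub_le)
    (fun s => hfderiv.norm_apply_le (Y' s)) hS.remainder hc.remainder
  rw [coeffRem_eq_taylorRem_add, coeffRem_eq_taylorRem_add, add_sub_add_comm]
  refine (htaylor.add hlinear).mono ?_
  have h₁ : Q * m ≤ Q ^ 3 * m := by gcongr; exact le_self_pow₀ hf.one_le (by norm_num)
  have h₂ : Q ^ 2 * m ≤ Q ^ 3 * m := by gcongr; exacts [hf.one_le, by norm_num]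
  linarith

lemma defectBound_davieGerm_sub (hc : SolutionsClose f α T m X X' 𝕏 𝕏' Y Y') (hα : 0 ≤ α)
    (hf : CoeffBound α κ f Q) (hS : SolutionBound κ f α T Q X 𝕏 Y)
    (hS' : SolutionBound κ f α T Q X' 𝕏' Y') :
    DefectBound α T 3 (10 * Q ^ 4 * m) (davieGerm κ f X 𝕏 Y - davieGerm κ f X' 𝕏' Y') := by
  intro s u t hs hsu hut ht
  have hT : 0 ≤ T := by linarith
  have hpath := (hS'.holderBound_coeffRem hf).norm_apply_sub_apply_le
    (hc.holderBound_coeffRem_sub hT hf hS hS') hS.path hc.path hα hs hsu hut ht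
  have hsecond := ((hf.second_field.of_le one_le_two).holderBound_comp hS'.solution).clm_apply
    fun _ => hf.norm_pairing_le
  have hsecond_sub := (hf.second_field.holderBound_comp_sub hc.norm_sub_le hS.solution
    hc.solution).clm_apply fun _ => hf.norm_pairing_le
  simp only [Pi.sub_apply, map_sub] at hsecond_sub
  have harea := HolderBound.norm_apply_sub_apply_le
    (P := fun s t => κ (increment (fun t => secondField f (Y t)) s t))
    hsecond hsecond_sub hS.area hc.area hα hs hsu hut ht
  have hpow : 0 ≤ ((t - s) ^ α) ^ 3 := pow_nonneg (Real.rpow_nonneg (by linarith) α) 3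
  have hconst : 5 * Q ^ 3 * m * Q + 2 * Q ^ 3 * m +
      (Q * (Q * (Q * m + m)) * Q + Q * (Q * Q) * m) ≤ 10 * Q ^ 4 * m := by
    have hm : 0 ≤ m := (norm_nonneg _).trans (hc.norm_sub_le 0 ⟨le_rfl, hT⟩)
    have hpow_le : Q ^ 3 * m ≤ Q ^ 4 * m := by gcongr; exacts [hf.one_le, by norm_num]
    linarith
  calc ‖(davieGerm κ f X 𝕏 Y - davieGerm κ f X' 𝕏' Y') s t -
          (davieGerm κ f X 𝕏 Y - davieGerm κ f X' 𝕏' Y') s u -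
          (davieGerm κ f X 𝕏 Y - davieGerm κ f X' 𝕏' Y') u t‖
      = ‖(davieGerm κ f X' 𝕏' Y' s t - davieGerm κ f X' 𝕏' Y' s u - davieGerm κ f X' 𝕏' Y' u t) -
          (davieGerm κ f X 𝕏 Y s t - davieGerm κ f X 𝕏 Y s u - davieGerm κ f X 𝕏 Y u t)‖ := by
        rw [norm_sub_rev]
        simp only [Pi.sub_apply]
        congr 1
        abel
    _ ≤ (5 * Q ^ 3 * m * Q + 2 * Q ^ 3 * m) * ((t - s) ^ α) ^ (2 + 1) +
          (Q * (Q * (Q * m + m)) * Q + Q * (Q * Q) * m) * ((t - s) ^ α) ^ (1 + 2) := by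
        rw [hS.chen.davieGerm_defect hs hsu hut ht, hS'.chen.davieGerm_defect hs hsu hut ht,
          neg_sub_neg, add_sub_add_comm]
        exact norm_add_le_of_le hpath harea
    _ ≤ 10 * Q ^ 4 * m * ((t - s) ^ α) ^ 3 := by
        rw [← add_mul]
        exact mul_le_mul_of_nonneg_right hconst hpow

lemma holderBound_increment_sub_davieGerm_sub (hc : SolutionsClose f α T m X X' 𝕏 𝕏' Y Y')
    (hα : 1 / 3 < α) (hf : CoeffBound α κ f Q) (hS : SolutionBound κ f α T Q X 𝕏 Y)
    (hS' : SolutionBound κ f α T Q X' 𝕏' Y') (hT : 0 ≤ T) :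
    HolderBound α T 3 (10 * Q ^ 5 * m)
      ((increment Y - davieGerm κ f X 𝕏 Y) - (increment Y' - davieGerm κ f X' 𝕏' Y')) := by
  have hm : 0 ≤ m := (norm_nonneg _).trans (hc.norm_sub_le 0 ⟨le_rfl, hT⟩)
  have : 0 ≤ Q := hf.field.bound_nonneg
  have hsewing := (hS.limit.sub hS'.limit).holderBound_increment_sub (by norm_num; linarith)
    (hc.defectBound_davieGerm_sub (by linarith) hf hS hS')
  rw [sub_sub_sub_comm, increment_sub_increment]
  refine hsewing.mono ?_
  calc sewingConst α 3 * (10 * Q ^ 4 * m) ≤ Q * (10 * Q ^ 4 * m) := by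
        gcongr; exact hf.sewingConst_le
    _ = 10 * Q ^ 5 * m := by ring

end SolutionsClose

namespace DataClose

omit [NormedSpace ℝ W] in
lemma solutionsClose (hd : DataClose α T r X X' 𝕏 𝕏' Y Y') (hα : 0 ≤ α) (hw : 0 ≤ w)
    (hT : T ^ α ≤ 1) (hY : HolderBound α T 1 w (increment Y - increment Y'))
    (hR : HolderBound α T 2 w (controlledRem f X Y - controlledRem f X' Y')) :
    SolutionsClose f α T (r + w) X X' 𝕏 𝕏' Y Y' := by
  have hr : 0 ≤ r := (norm_nonneg _).trans hd.start
  have hwT : w * T ^ α ≤ w := mul_le_of_le_one_right hw hT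
  exact ⟨hd.path.mono (by linarith), hd.area.mono (by linarith),
    fun t ht => (hY.norm_sub_le_of_norm_zero_le hα hw hd.start t ht).trans (by linarith),
    hY.mono (by linarith), hR.mono (by linarith)⟩

variable (hα : 1 / 3 < α) (hT : 0 ≤ T) (hsmall : 100 * Q ^ 5 * T ^ α ≤ 1)
  (hf : CoeffBound α κ f Q) (hS : SolutionBound κ f α T Q X 𝕏 Y)
  (hS' : SolutionBound κ f α T Q X' 𝕏' Y')

include hf hS hα hT hsmall

lemma holderBound_increment_sub_step (hd : DataClose α T r X X' 𝕏 𝕏' Y Y') (hw : 0 ≤ w)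
    (hY : HolderBound α T 1 w (increment Y - increment Y'))
    (hR : HolderBound α T 2 w (controlledRem f X Y - controlledRem f X' Y')) :
    HolderBound α T 1 (3 * Q ^ 3 * r + w / 2) (increment Y - increment Y') := by
  have hα₀ : 0 ≤ α := by linarith
  have hQ : 1 ≤ Q := hf.one_le
  have hr : 0 ≤ r := (norm_nonneg _).trans hd.start
  have : 0 ≤ T ^ α := Real.rpow_nonneg hT α
  have hdrift := HolderBound.clm_apply_sub
    ((hf.field.of_le (by norm_num)).norm_comp_sub_le
      (hY.norm_sub_le_of_norm_zero_le hα₀ hw hd.start))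
    (fun s => hf.field.norm_apply_le (Y' s)) hS.path hd.path
  rw [increment_eq_controlledRem_add (f := f) (X := X) (Y := Y),
    increment_eq_controlledRem_add (f := f) (X := X') (Y := Y'), add_sub_add_comm]
  refine ((hR.lower hα₀).add hdrift).mono ?_
  have h₁ : Q * r ≤ Q ^ 3 * r := by gcongr; exact le_self_pow₀ hQ (by norm_num)
  have h₂ : Q ^ 2 * r ≤ Q ^ 3 * r := by gcongr; norm_num
  have h₃ : 1 * T ^ α * w ≤ Q ^ 5 * T ^ α * w := by gcongr; exact one_le_pow₀ hQ
  have h₄ : Q ^ 2 * T ^ α * w ≤ Q ^ 5 * T ^ α * w := by gcongr; norm_num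
  have h₅ : 100 * Q ^ 5 * T ^ α * w ≤ 1 * w := by gcongr
  linarith [mul_nonneg (pow_nonneg (zero_le_one.trans hQ) 3) hr]

include hS'

lemma holderBound_controlledRem_sub_step (hd : DataClose α T r X X' 𝕏 𝕏' Y Y') (hw : 0 ≤ w)
    (hY : HolderBound α T 1 w (increment Y - increment Y'))
    (hR : HolderBound α T 2 w (controlledRem f X Y - controlledRem f X' Y')) :
    HolderBound α T 2 (3 * Q ^ 3 * r + w / 2) (controlledRem f X Y - controlledRem f X' Y') := by
  have hα₀ : 0 ≤ α := by linarith
  have hQ : 1 ≤ Q := hf.one_le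
  have hr : 0 ≤ r := (norm_nonneg _).trans hd.start
  have hTα : 0 ≤ T ^ α := Real.rpow_nonneg hT α
  have hT₁ : T ^ α ≤ 1 := by nlinarith [one_le_pow₀ hQ (n := 5)]
  have hgerm := ((hd.solutionsClose hα₀ hw hT₁ hY hR).holderBound_increment_sub_davieGerm_sub
    hα hf hS hS' hT).lower hα₀
  have hpairing_sub : ∀ t ∈ Set.Icc 0 T, ‖κ (secondField f (Y t)) - κ (secondField f (Y' t))‖ ≤
      Q * (Q * (r + w * T ^ α)) := fun t ht => by
    rw [← map_sub]
    exact κ.le_of_opNorm_le_of_le hf.norm_pairing_le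
      ((hf.second_field.of_le one_le_two).norm_comp_sub_le
        (hY.norm_sub_le_of_norm_zero_le hα₀ hw hd.start) t ht)
  have harea := HolderBound.clm_apply_sub hpairing_sub
    (fun s => hf.norm_pairing_secondField_le (Y' s)) hS.area hd.area
  rw [controlledRem_eq_increment_sub_davieGerm_add (κ := κ) (𝕏 := 𝕏),
    controlledRem_eq_increment_sub_davieGerm_add (κ := κ) (𝕏 := 𝕏'), add_sub_add_comm]
  refine (hgerm.add harea).mono ?_
  have h₁ : 1 * r ≤ Q ^ 3 * r := by gcongr; exact one_le_pow₀ hQ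
  have h₂ : Q ^ 2 * r ≤ Q ^ 3 * r := by gcongr; norm_num
  have h₃ : Q ^ 3 * T ^ α * w ≤ Q ^ 5 * T ^ α * w := by gcongr; norm_num
  have h₄ : 100 * Q ^ 5 * T ^ α * (r + w) ≤ 1 * (r + w) := by gcongr
  have h₅ : 100 * Q ^ 5 * T ^ α * w ≤ 1 * w := by gcongr
  linarith

theorem holderBound_increment_sub (hd : DataClose α T r X X' 𝕏 𝕏' Y Y') :
    HolderBound α T 1 (6 * Q ^ 3 * r) (increment Y - increment Y') := by
  have hQ : 0 ≤ Q := hf.field.bound_nonneg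
  have hr : 0 ≤ r := (norm_nonneg _).trans hd.start
  have habsorbed : HolderBound α T 1 (2 * (3 * Q ^ 3 * r)) (increment Y - increment Y') ∧
      HolderBound α T 2 (2 * (3 * Q ^ 3 * r)) (controlledRem f X Y - controlledRem f X' Y') :=
    two_mul_mem_of_absorption
      ((isClosed_setOf_holderBound α T 1 (increment Y - increment Y')).inter
        (isClosed_setOf_holderBound α T 2 (controlledRem f X Y - controlledRem f X' Y')))
      (fun _ _ hK h => ⟨h.1.mono hK, h.2.mono hK⟩)
      ⟨Q + Q, hS.solution.sub hS'.solution, hS.remainder.sub hS'.remainder⟩ (by positivity)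
      fun _ h hK => ⟨hd.holderBound_increment_sub_step hα hT hsmall hf hS hK h.1 h.2,
        hd.holderBound_controlledRem_sub_step hα hT hsmall hf hS hS' hK h.1 h.2⟩
  exact habsorbed.1.mono (by linarith)

end DataClose

/-! ### The Itô–Lyons map -/

/-- `(X, 𝕏)` is an `α`-Hölder rough path on `[0,1]`, its second level being seen through the
pairing `κ` of bilinear maps with elements of `W`. -/
structure IsRoughPathVia (κ : (V →L[ℝ] V →L[ℝ] E) →L[ℝ] W →L[ℝ] E) (α : ℝ) (X : ℝ → V)
    (𝕏 : ℝ → ℝ → W) : Prop where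
  chen : ChenRelation κ 1 X 𝕏
  bddAbove_path : BddAbove (holderRatios α 1 X)
  bddAbove_area : BddAbove (holderRatios2 α 1 𝕏)

/-- `Y` solves `dY = f(Y) d𝐗`, `Y_0 = ξ`, on `[0,T]`: it is controlled by `X`, and the rough
integral `∫ f(Y) d𝐗`, a limit of compensated Riemann sums, is `Y - ξ`. -/
structure SolvesRDEVia (κ : (V →L[ℝ] V →L[ℝ] E) →L[ℝ] W →L[ℝ] E) (α T : ℝ) (X : ℝ → V)
    (𝕏 : ℝ → ℝ → W) (f : E → V →L[ℝ] E) (ξ : E) (Y : ℝ → E) : Prop where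
  bddAbove_controlledRem : BddAbove (holderRatios2 α T (controlledRem f X Y))
  hasRiemannIntegral : HasRiemannIntegral T (davieGerm κ f X 𝕏 Y) fun t => Y t - ξ

variable {M : ℝ} {ξ ξ' : E}

lemma IsRoughPathVia.roughBound (hX : IsRoughPathVia κ α X 𝕏) (hT : T ≤ 1)
    (hM : sSup (holderRatios α 1 X) + √(sSup (holderRatios2 α 1 𝕏)) ≤ M) :
    RoughBound κ α T (max M (M ^ 2)) X 𝕏 := by
  have hpath : sSup (holderRatios α 1 X) ≤ M :=
    (le_add_of_nonneg_right (Real.sqrt_nonneg _)).trans hM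
  have harea : sSup (holderRatios2 α 1 𝕏) ≤ M ^ 2 :=
    (Real.sqrt_le_iff.mp ((le_add_of_nonneg_left (sSup_holderRatios_nonneg X)).trans hM)).2
  exact ⟨fun _ _ _ hs hsu hut ht => hX.chen hs hsu hut (ht.trans hT),
    ((holderBound_of_bddAbove_holderRatios hX.bddAbove_path).mono_time hT).mono
      (hpath.trans (le_max_left _ _)),
    ((holderBound_of_bddAbove_holderRatios2 hX.bddAbove_area).mono_time hT).mono
      (harea.trans (le_max_right _ _))⟩

lemma SolvesRDEVia.apply_zero (hY : SolvesRDEVia κ α T X 𝕏 f ξ Y) (hT : 0 ≤ T) : Y 0 = ξ :=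
  sub_eq_zero.mp (hY.hasRiemannIntegral.apply_zero hT)

lemma SolvesRDEVia.solutionBound (hY : SolvesRDEVia κ α T X 𝕏 f ξ Y) (hα : 1 / 3 < α) (hT : 0 ≤ T)
    (hsmall : 4 * N ^ 7 * T ^ α ≤ 1) (hf : CoeffBound α κ f N) (hX : RoughBound κ α T N X 𝕏) :
    SolutionBound κ f α T (4 * N ^ 3) X 𝕏 Y :=
  solutionBound_of_isDyadicLimit hα hT hsmall hf hX hY.hasRiemannIntegral.isDyadicLimit.of_sub_const
    (holderBound_of_bddAbove_holderRatios2 hY.bddAbove_controlledRem)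

lemma IsRoughPathVia.dataClose (hX : IsRoughPathVia κ α X 𝕏) (hX' : IsRoughPathVia κ α X' 𝕏')
    (hT : T ≤ 1) (h₀ : Y 0 = ξ) (h₀' : Y' 0 = ξ') :
    DataClose α T (‖ξ - ξ'‖ + (sSup (holderRatios α 1 fun t => X t - X' t) +
      sSup (holderRatios2 α 1 fun s t => 𝕏 s t - 𝕏' s t))) X X' 𝕏 𝕏' Y Y' := by
  have hξ : 0 ≤ ‖ξ - ξ'‖ := norm_nonneg _
  have hpath := sSup_holderRatios_nonneg (α := α) (T := 1) fun t => X t - X' t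
  have harea := sSup_holderRatios2_nonneg (α := α) (T := 1) fun s t => 𝕏 s t - 𝕏' s t
  refine ⟨?_, ?_, ?_⟩
  · rw [increment_sub_increment]
    exact ((holderBound_of_bddAbove_holderRatios (bddAbove_holderRatios_sub hX.bddAbove_path
      hX'.bddAbove_path)).mono_time hT).mono (by linarith)
  · exact ((holderBound_of_bddAbove_holderRatios2 (bddAbove_holderRatios2_sub hX.bddAbove_area
      hX'.bddAbove_area)).mono_time hT).mono (by linarith)
  · rw [h₀, h₀']
    linarith

lemma exists_pos_time (hα : 0 < α) {K : ℝ} (hK : 1 ≤ K) :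
    ∃ T : ℝ, 0 < T ∧ T ≤ 1 ∧ K * T ^ α ≤ 1 := by
  have hK₀ : 0 < K := zero_lt_one.trans_le hK
  refine ⟨K⁻¹ ^ α⁻¹, Real.rpow_pos_of_pos (inv_pos.mpr hK₀) _,
    Real.rpow_le_one (inv_nonneg.mpr hK₀.le) (inv_le_one_of_one_le₀ hK) (inv_nonneg.mpr hα.le), ?_⟩
  rw [Real.rpow_inv_rpow (inv_nonneg.mpr hK₀.le) hα.ne', mul_inv_cancel₀ hK₀.ne']

theorem ito_lyons_local_lipschitz_general (hα : 1 / 3 < α) (M : ℝ) (hf : BddContDiff 3 N f)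
    (κ : (V →L[ℝ] V →L[ℝ] E) →L[ℝ] W →L[ℝ] E) :
    ∃ T₀ : ℝ, 0 < T₀ ∧ T₀ ≤ 1 ∧ ∃ C : ℝ, ∀ (X X' : ℝ → V) (𝕏 𝕏' : ℝ → ℝ → W),
      IsRoughPathVia κ α X 𝕏 → IsRoughPathVia κ α X' 𝕏' →
      sSup (holderRatios α 1 X) + √(sSup (holderRatios2 α 1 𝕏)) ≤ M →
      sSup (holderRatios α 1 X') + √(sSup (holderRatios2 α 1 𝕏')) ≤ M →
      ∀ (ξ ξ' : E) (Y Y' : ℝ → E),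
        SolvesRDEVia κ α T₀ X 𝕏 f ξ Y → SolvesRDEVia κ α T₀ X' 𝕏' f ξ' Y' →
        ∀ s t : ℝ, 0 ≤ s → s < t → t ≤ T₀ →
          ‖(Y t - Y' t) - (Y s - Y' s)‖ ≤
            C * (‖ξ - ξ'‖ + (sSup (holderRatios α 1 fun u => X u - X' u) +
              sSup (holderRatios2 α 1 fun u v => 𝕏 u v - 𝕏' u v))) * (t - s) ^ α := by
  obtain ⟨N₀, hN₀⟩ := hf.exists_coeffBound α κ
  set N₁ : ℝ := max N₀ (max M (M ^ 2))
  have hf₁ : CoeffBound α κ f N₁ := hN₀.mono (le_max_left _ _)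
  have hN₁ : 1 ≤ N₁ := hf₁.one_le
  have hQ : N₁ ≤ 4 * N₁ ^ 3 := by linarith [le_self_pow₀ hN₁ three_ne_zero]
  have hf₂ : CoeffBound α κ f (4 * N₁ ^ 3) := hf₁.mono hQ
  obtain ⟨T, hT, hT₁, hsmall⟩ := exists_pos_time (α := α) (by linarith)
    (show 1 ≤ 100 * (4 * N₁ ^ 3) ^ 5 by linarith [one_le_pow₀ hf₂.one_le (n := 5)])
  have : 0 ≤ T ^ α := Real.rpow_nonneg hT.le α
  have hsmall₁ : 4 * N₁ ^ 7 * T ^ α ≤ 1 := by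
    refine le_trans ?_ hsmall
    rw [mul_pow, ← mul_assoc, ← pow_mul]
    gcongr <;> norm_num
  refine ⟨T, hT, hT₁, 6 * (4 * N₁ ^ 3) ^ 3, ?_⟩
  intro X X' 𝕏 𝕏' hX hX' hM hM' ξ ξ' Y Y' hY hY' s t hs hst ht
  have hS := hY.solutionBound hα hT.le hsmall₁ hf₁
    ((hX.roughBound hT₁ hM).mono (le_max_right _ _))
  have hS' := hY'.solutionBound hα hT.le hsmall₁ hf₁
    ((hX'.roughBound hT₁ hM').mono (le_max_right _ _))
  have hd := hX.dataClose hX' hT₁ (hY.apply_zero hT.le) (hY'.apply_zero hT.le)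
  have hlip := hd.holderBound_increment_sub hα hT.le hsmall hf₂ hS hS'
  rw [increment_sub_increment] at hlip
  simpa [increment] using hlip hs hst ht

end RoughDifferentialEquations

section Tensors

set_option maxSynthPendingDepth 3

variable {d e : ℕ}

lemma norm_contractTensor_le (B : Euc d →L[ℝ] Euc d →L[ℝ] Euc e)
    (w : EuclideanSpace ℝ (Fin d × Fin d)) : ‖contractTensor B w‖ ≤ d * d * ‖B‖ * ‖w‖ :=
  calc ‖contractTensor B w‖ ≤ ∑ _i : Fin d, ∑ _j : Fin d, ‖w‖ * ‖B‖ := by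
        refine norm_sum_le_of_le _ fun i _ => norm_sum_le_of_le _ fun j _ => ?_
        rw [norm_smul]
        gcongr
        · exact PiLp.norm_apply_le w (i, j)
        · simpa using B.le_opNorm₂ (EuclideanSpace.single i 1) (EuclideanSpace.single j 1)
    _ = d * d * ‖B‖ * ‖w‖ := by
        simp only [Finset.sum_const, Finset.card_univ, Fintype.card_fin, nsmul_eq_mul]
        ring

/-- `contractTensor` as a bounded bilinear map, the pairing through which a matrix-valued second
level acts on bilinear maps. -/
def contractTensorL (d e : ℕ) : (Euc d →L[ℝ] Euc d →L[ℝ] Euc e) →L[ℝ]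
    EuclideanSpace ℝ (Fin d × Fin d) →L[ℝ] Euc e :=
  (LinearMap.mk₂ ℝ contractTensor
    (fun B B' w => by
      simp only [contractTensor, add_apply, smul_add, Finset.sum_add_distrib])
    (fun c B w => by
      simp only [contractTensor, smul_apply, smul_comm c, Finset.smul_sum])
    (fun B w w' => by
      simp only [contractTensor, PiLp.add_apply, add_smul, Finset.sum_add_distrib])
    (fun c B w => by
      simp only [contractTensor, PiLp.smul_apply, smul_assoc, Finset.smul_sum])).mkContinuous₂
    (d * d) norm_contractTensor_le

lemma contractTensor_eq_apply_of_forall_eq_mul {w : EuclideanSpace ℝ (Fin d × Fin d)}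
    {x y : Euc d} (hw : ∀ i j, w (i, j) = x i * y j) (B : Euc d →L[ℝ] Euc d →L[ℝ] Euc e) :
    contractTensor B w = B x y := by
  conv_rhs => rw [← (EuclideanSpace.basisFun (Fin d) ℝ).sum_repr x,
    ← (EuclideanSpace.basisFun (Fin d) ℝ).sum_repr y]
  simp only [contractTensor, hw, map_sum, map_smul, sum_apply, smul_apply, Finset.smul_sum,
    smul_smul, EuclideanSpace.basisFun_apply, EuclideanSpace.basisFun_repr]
  rw [Finset.sum_comm]
  simp only [mul_comm]

lemma IsRoughPath.isRoughPathVia {α : ℝ} {X : ℝ → Euc d}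
    {𝕏 : ℝ → ℝ → EuclideanSpace ℝ (Fin d × Fin d)} (hX : IsRoughPath α X 𝕏) (e : ℕ) :
    IsRoughPathVia (contractTensorL d e) α X 𝕏 := by
  obtain ⟨-, hchen, hpath, harea⟩ := hX
  refine ⟨fun s u t hs hsu hut ht B => ?_, hpath, harea⟩
  have hcontract : contractTensorL d e B (𝕏 s t - 𝕏 s u - 𝕏 u t) =
      B (increment X s u) (increment X u t) :=
    contractTensor_eq_apply_of_forall_eq_mul (hchen s u t hs hsu.le hut.le ht) B
  rw [map_sub, map_sub] at hcontract
  rw [← hcontract]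
  abel

lemma SolvesRDE.solvesRDEVia {α T : ℝ} {X : ℝ → Euc d}
    {𝕏 : ℝ → ℝ → EuclideanSpace ℝ (Fin d × Fin d)} {f : Euc e → Euc d →L[ℝ] Euc e} {ξ : Euc e}
    {Y : ℝ → Euc e} (hY : SolvesRDE α T X 𝕏 f ξ Y) :
    SolvesRDEVia (contractTensorL d e) α T X 𝕏 f ξ Y := by
  obtain ⟨-, -, hrem, hint⟩ := hY
  refine ⟨hrem, fun t ht ε hε => ?_⟩
  obtain ⟨δ, hδ, hsum⟩ := hint t ht ε hε
  refine ⟨δ, hδ, fun v hv => ?_⟩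
  obtain ⟨k, τ, hτ₀, hτ, hlt, hmesh, rfl⟩ := hv.exists_partition
  exact hsum k τ hτ₀ hτ hlt hmesh

end Tensors

/-- Local Lipschitz continuity of the Itô–Lyons map: for `α ∈ (1/3,1/2]`,
`M > 0` and `f ∈ C³_b`, there exist `T₀ > 0` and a constant `C` (depending only on
`M`, `α`, `f`) such that for any two `α`-Hölder rough paths `𝐗, 𝐗̃` with
`‖𝐗‖_{𝒞^α}, ‖𝐗̃‖_{𝒞^α} ≤ M` and any solutions `Y, Ỹ` on `[0,T₀]` of
`dY = f(Y)d𝐗, Y_0 = ξ` and `dỸ = f(Ỹ)d𝐗̃, Ỹ_0 = ξ̃`, one has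
`‖Y − Ỹ‖_α ≤ C (|ξ − ξ̃| + ϱ_α(𝐗,𝐗̃))`. -/
theorem ito_lyons_local_lipschitz (α : ℝ) (hα1 : 1/3 < α) (hα2 : α ≤ 1/2)
    (M : ℝ) (hM : 0 < M) (d e : ℕ) (f : Euc e → (Euc d →L[ℝ] Euc e))
    (hf_smooth : ContDiff ℝ 3 f)
    (hf_bdd : ∀ i : ℕ, i ≤ 3 → ∃ C : ℝ, ∀ x, ‖iteratedFDeriv ℝ i f x‖ ≤ C) :
    ∃ T₀ : ℝ, 0 < T₀ ∧ T₀ ≤ 1 ∧ ∃ C : ℝ,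
      ∀ (X X' : ℝ → Euc d) (XX XX' : ℝ → ℝ → EuclideanSpace ℝ (Fin d × Fin d)),
        IsRoughPath α X XX → IsRoughPath α X' XX' →
        sSup (holderRatios α 1 X) + Real.sqrt (sSup (holderRatios2 α 1 XX)) ≤ M →
        sSup (holderRatios α 1 X') + Real.sqrt (sSup (holderRatios2 α 1 XX')) ≤ M →
        ∀ (ξ ξ' : Euc e) (Y Y' : ℝ → Euc e),
          SolvesRDE α T₀ X XX f ξ Y → SolvesRDE α T₀ X' XX' f ξ' Y' →
          ∀ s t : ℝ, 0 ≤ s → s < t → t ≤ T₀ →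
            ‖(Y t - Y' t) - (Y s - Y' s)‖ ≤
              C * (‖ξ - ξ'‖ +
                  (sSup (holderRatios α 1 (fun u => X u - X' u)) +
                    sSup (holderRatios2 α 1 (fun u v => XX u v - XX' u v)))) *
                (t - s) ^ α := by
  obtain ⟨N, hf⟩ := exists_bddContDiff (by exact_mod_cast hf_smooth) hf_bdd
  obtain ⟨T₀, hT₀, hT₁, C, hC⟩ :=
    ito_lyons_local_lipschitz_general hα1 M hf (contractTensorL d e)
  exact ⟨T₀, hT₀, hT₁, C, fun X X' XX XX' hX hX' hM hM' ξ ξ' Y Y' hY hY' =>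
    hC X X' XX XX' (hX.isRoughPathVia e) (hX'.isRoughPathVia e) hM hM' ξ ξ' Y Y'
      hY.solvesRDEVia hY'.solvesRDEVia⟩

end
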